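/- Let (X,d_X) be a metric space, f a continuous node-level statistic in X, and A_1,…,A_N disjoint open subsets of X. Let 𝒟 be the set of graphons W such that f(W)(y) ∈ A_1 ∪ … ∪ A_N for almost every y ∈ [0,1], and for W ∈ 𝒟 define the coloring c_W : [0,1] → {1,…,N} by c_W(y) = j if and only if f(W)(y) ∈ A_j (well-defined for a.e. y). If (W_n)_{n≥1} ⊆ 𝒟 and W_0 ∈ 𝒟 satisfy ‖W_n − W_0‖_□ → 0, then for every j ∈ {1,…,N} the Lebesgue measure of the symmetric difference c_{W_n}⁻¹(j) Δ c_{W_0}⁻¹(j) tends to 0 as n → ∞. -/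

import Mathlib

/-!
Since `f(W n) → f(W 0)` in `L¹`, Markov's inequality gives convergence in measure. If `f(W n)(y)`
and `f(W 0)(y)` disagree about membership in a set `s`, then either they are at distance at least
`δ`, or `f(W 0)(y)` lies within `δ` of both `s` and its complement. The first event has small
measure for large `n`. As `δ → 0`, the second one decreases to `f(W 0)(y) ∈ frontier s`, which is a
null event for `s = A j`: almost every `f(W 0)(y)` lies in one of the disjoint open sets `A l`, and
these do not meet the frontier of `A j`.

Since `X` need not be separable, the measurability of `y ↦ dist (f(W n)(y)) (f(W 0)(y))`, without
which the Bochner integral carries no information, is not automatic. It holds because a Borel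
function `g` from a standard Borel space to `X` has separable range. To see this, it suffices that
every `ε`-separated set `C` in the range is countable. All subsets of `C` are closed. Choose `T`
mapped bijectively onto `C` by `g`; then `T` and all of its subsets are Borel. An uncountable such
`T` would be Borel isomorphic to `ℝ`, and all `2 ^ 𝔠` subsets of `ℝ` would be Borel, but only `𝔠`
of them are.
-/

open MeasureTheory Set Filter
open scoped symmDiff

noncomputable section

/-- The unit interval `[0,1]` as a subset of `ℝ`. -/
def I01 : Set ℝ := Set.Icc 0 1

/-- A graphon: a symmetric measurable kernel with values in `[0,1]`. -/
structure Graphon where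
  W : ℝ → ℝ → ℝ
  measurable : Measurable (Function.uncurry W)
  symm : ∀ x y, W x y = W y x
  nonneg : ∀ x y, 0 ≤ W x y
  le_one : ∀ x y, W x y ≤ 1

/-- The cut norm `‖U‖_□` of a kernel `U`. -/
def cutNorm (U : ℝ → ℝ → ℝ) : ℝ :=
  sSup { r | ∃ A B : Set ℝ, MeasurableSet A ∧ MeasurableSet B ∧ A ⊆ I01 ∧ B ⊆ I01 ∧
    r = |∫ x in A, ∫ y in B, U x y| }

/-- A continuous node-level statistic with values in a metric space `X`:
it assigns to each graphon a measurable `X`-valued function on `[0,1]` lying in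
`L¹([0,1], X)`, and it is continuous: whenever `‖Wₙ − W₀‖_□ → 0`, we have
`d₁(f(Wₙ), f(W₀)) = ∫₀¹ d_X(f(Wₙ)(y), f(W₀)(y)) dy → 0`. -/
structure NodeStat (X : Type*) [MetricSpace X] [MeasurableSpace X] [BorelSpace X] where
  val : Graphon → ℝ → X
  meas : ∀ V, Measurable (val V)
  integ : ∀ V, ∃ x₀ : X, Integrable (fun y => dist x₀ (val V y)) (volume.restrict I01)
  cont : ∀ (Wn : ℕ → Graphon) (W0 : Graphon),
    Tendsto (fun n => cutNorm fun x y => (Wn n).W x y - W0.W x y) atTop (nhds 0) →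
    Tendsto (fun n => ∫ y in I01, dist (val (Wn n) y) (val W0 y)) atTop (nhds 0)

open scoped Topology ENNReal NNReal Cardinal

section SeparableRange

theorem exists_not_measurableSet_real : ∃ s : Set ℝ, ¬ MeasurableSet s := by
  by_contra! h_all
  have card_measurableSet_le : #{s : Set ℝ | MeasurableSet s} ≤ 𝔠 := by
    have card_generators_le := (MeasurableSpace.countable_countableGeneratingSet (α := ℝ)).le_aleph0
    have card_generated_le := MeasurableSpace.cardinal_measurableSet_le_continuum
      (card_generators_le.trans Cardinal.aleph0_le_continuum)
    rwa [MeasurableSpace.generateFrom_countableGeneratingSet] at card_generated_le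
  have measurableSet_eq_univ : {s : Set ℝ | MeasurableSet s} = univ := eq_univ_of_forall h_all
  rw [measurableSet_eq_univ, Cardinal.mk_univ, Cardinal.mk_set, Cardinal.mk_real]
    at card_measurableSet_le
  exact (Cardinal.cantor 𝔠).not_ge card_measurableSet_le

theorem countable_of_discreteMeasurableSpace (α : Type*) [MeasurableSpace α]
    [StandardBorelSpace α] [DiscreteMeasurableSpace α] : Countable α := by
  by_contra hα
  obtain ⟨s, hs⟩ := exists_not_measurableSet_real
  have e : α ≃ᵐ ℝ := PolishSpace.measurableEquivOfNotCountable hα Uncountable.not_countable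
  exact hs (e.measurableSet_preimage.1 .of_discrete)

theorem countable_of_forall_subset_measurableSet {α : Type*} [MeasurableSpace α]
    [StandardBorelSpace α] {T : Set α} (hT : ∀ S ⊆ T, MeasurableSet S) : T.Countable := by
  have : StandardBorelSpace T := (hT T subset_rfl).standardBorel
  have : DiscreteMeasurableSpace T := ⟨fun S ↦
    (MeasurableEmbedding.subtype_coe (hT T subset_rfl)).measurableSet_image.1
      (hT _ (Subtype.coe_image_subset T S))⟩
  exact countable_coe_iff.1 (countable_of_discreteMeasurableSpace T)

theorem measurableSet_of_injOn_of_forall_subset_image_measurableSet {α β : Type*}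
    [MeasurableSpace α] [MeasurableSpace.CountablySeparated α] [MeasurableSpace β] {g : α → β}
    (hg : Measurable g) {T : Set α} (hinj : InjOn g T) (hT : ∀ D ⊆ g '' T, MeasurableSet D) :
    MeasurableSet T := by
  obtain ⟨A, hA, hsep⟩ := exists_seq_separating α MeasurableSet.empty univ
  -- A point `x` with `g x = g t` for some `t ∈ T` equals `t` iff no `A n` separates the two, and
  -- whether `t ∈ A n` can be read off from `g x`.
  have hT_eq : T = g ⁻¹' (g '' T) ∩ ⋂ n, {x | x ∈ A n ↔ g x ∈ g '' (T ∩ A n)} := by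
    ext x
    simp only [mem_inter_iff, mem_preimage, mem_iInter, mem_ofPred_eq]
    constructor
    · intro hx
      refine ⟨mem_image_of_mem g hx, fun n ↦ ?_⟩
      rw [hinj.mem_image_iff inter_subset_left hx]
      exact (and_iff_right hx).symm
    · rintro ⟨⟨t, ht, htx⟩, hx⟩
      have hxt : x = t := hsep x (mem_univ x) t (mem_univ t) fun n ↦ by
        rw [hx n, ← htx, hinj.mem_image_iff inter_subset_left ht]
        exact and_iff_right ht
      exact hxt ▸ ht
  rw [hT_eq]
  exact (hg (hT _ subset_rfl)).inter <| .iInter fun n ↦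
    (hA n).mem.iff (hg (hT _ (image_mono inter_subset_left))).mem |>.setOf

theorem countable_of_subset_range_of_forall_subset_measurableSet {α β : Type*} [MeasurableSpace α]
    [StandardBorelSpace α] [MeasurableSpace β] {g : α → β} (hg : Measurable g) {C : Set β}
    (hCg : C ⊆ range g) (hC : ∀ D ⊆ C, MeasurableSet D) : C.Countable := by
  have hg_surj : SurjOn g univ C := by rwa [SurjOn, image_univ]
  obtain ⟨T, -, hT⟩ := hg_surj.exists_bijOn_subset
  have hT_countable : T.Countable := countable_of_forall_subset_measurableSet fun S hS ↦
    measurableSet_of_injOn_of_forall_subset_image_measurableSet hg (hT.injOn.mono hS) fun D hD ↦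
      hC D (hD.trans ((image_mono hS).trans hT.image_eq.subset))
  exact hT.image_eq ▸ hT_countable.image g

theorem exists_subset_isSeparated_isCover {X : Type*} [PseudoEMetricSpace X] (ε : ℝ≥0)
    (s : Set X) : ∃ C ⊆ s, Metric.IsSeparated ε C ∧ Metric.IsCover ε s C := by
  obtain ⟨C, hC⟩ := zorn_subset {C | C ⊆ s ∧ Metric.IsSeparated ε C} fun c hc hchain ↦
    ⟨⋃₀ c, ⟨sUnion_subset fun t ht ↦ (hc ht).1,
      (pairwise_sUnion hchain.directedOn).2 fun t ht ↦ (hc ht).2⟩,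
      fun _ ↦ subset_sUnion_of_mem⟩
  exact ⟨C, hC.prop.1, hC.prop.2, .of_maximal_isSeparated hC⟩

theorem isClosed_of_isSeparated {X : Type*} [EMetricSpace X] {ε : ℝ≥0∞} (hε : 0 < ε) {s : Set X}
    (hs : Metric.IsSeparated ε s) : IsClosed s :=
  isClosed_of_spaced_out (edist_mem_uniformity hε) fun _ hx _ hy hxy ↦
    not_lt.2 (hs hx hy hxy).le

theorem isSeparable_range_of_measurable {α X : Type*} [MeasurableSpace α] [StandardBorelSpace α]
    [EMetricSpace X] [MeasurableSpace X] [BorelSpace X] {g : α → X} (hg : Measurable g) :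
    TopologicalSpace.IsSeparable (range g) := by
  have h_net (ε : ℝ≥0∞) (hε : 0 < ε) :
      ∃ C : Set X, C.Countable ∧ range g ⊆ ⋃ x ∈ C, Metric.closedEBall x ε := by
    obtain ⟨δ, hδ, hδε⟩ := ENNReal.lt_iff_exists_nnreal_btwn.1 hε
    obtain ⟨C, hCg, hC_sep, hC_cover⟩ := exists_subset_isSeparated_isCover δ (range g)
    refine ⟨C, countable_of_subset_range_of_forall_subset_measurableSet hg hCg fun D hD ↦
      (isClosed_of_isSeparated hδ (hC_sep.subset hD)).measurableSet, ?_⟩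
    exact (Metric.isCover_iff_subset_iUnion_closedEBall.1 hC_cover).trans
      (iUnion₂_mono fun x _ ↦ Metric.closedEBall_subset_closedEBall hδε.le)
  obtain ⟨t, -, ht_countable, ht_dense⟩ :=
    EMetric.subset_countable_closure_of_almost_dense_set _ h_net
  exact ⟨t, ht_countable, ht_dense⟩

theorem stronglyMeasurable_of_measurable {α X : Type*} [MeasurableSpace α] [StandardBorelSpace α]
    [EMetricSpace X] [MeasurableSpace X] [BorelSpace X] {g : α → X} (hg : Measurable g) :
    StronglyMeasurable g :=
  stronglyMeasurable_iff_measurable_separable.2 ⟨hg, isSeparable_range_of_measurable hg⟩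

end SeparableRange

section BoundaryLayer

variable {X : Type*} [PseudoMetricSpace X]

/-- The boundary layer of width `δ` of `s`: the points at distance less than `δ` from both `s` and
its complement. Unlike the `δ`-thickening of `frontier s`, it contains every point from which a move
of length less than `δ` can enter or leave `s`, even if `X` is disconnected. -/
def boundaryLayer (δ : ℝ) (s : Set X) : Set X :=
  Metric.thickening δ s ∩ Metric.thickening δ sᶜ

theorem isOpen_boundaryLayer (δ : ℝ) (s : Set X) : IsOpen (boundaryLayer δ s) :=
  Metric.isOpen_thickening.inter Metric.isOpen_thickening

theorem boundaryLayer_mono {δ₁ δ₂ : ℝ} (hδ : δ₁ ≤ δ₂) (s : Set X) :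
    boundaryLayer δ₁ s ⊆ boundaryLayer δ₂ s :=
  inter_subset_inter (Metric.thickening_mono hδ s) (Metric.thickening_mono hδ sᶜ)

theorem iInter_boundaryLayer (s : Set X) : ⋂ δ > (0 : ℝ), boundaryLayer δ s = frontier s := by
  simp only [boundaryLayer, frontier_eq_closure_inter_closure,
    Metric.closure_eq_iInter_thickening, iInter_inter_distrib]

theorem symmDiff_preimage_subset_union_preimage_boundaryLayer {α : Type*} (g h : α → X)
    (s : Set X) (δ : ℝ) :
    (g ⁻¹' s) ∆ (h ⁻¹' s) ⊆ {x | δ ≤ dist (g x) (h x)} ∪ h ⁻¹' boundaryLayer δ s := by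
  intro x hx
  rcases le_or_gt δ (dist (g x) (h x)) with hfar | hnear
  · exact .inl hfar
  have hδ : 0 < δ := dist_nonneg.trans_lt hnear
  have h_mem_thickening {t : Set X} (hgt : g x ∈ t) : h x ∈ Metric.thickening δ t :=
    Metric.mem_thickening_iff.2 ⟨g x, hgt, by rwa [dist_comm]⟩
  rcases hx with ⟨hgs, hhs⟩ | ⟨hhs, hgs⟩
  · exact .inr ⟨h_mem_thickening hgs, Metric.self_subset_thickening hδ _ hhs⟩
  · exact .inr ⟨Metric.self_subset_thickening hδ _ hhs, h_mem_thickening hgs⟩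

end BoundaryLayer

theorem measure_inter_symmDiff_inter {α : Type*} [MeasurableSpace α] (μ : Measure α) {t : Set α}
    (ht : MeasurableSet t) (p q : Set α) :
    μ ((t ∩ p) ∆ (t ∩ q)) = μ.restrict t (p ∆ q) := by
  rw [Measure.restrict_apply' ht, inter_comm (p ∆ q), inter_symmDiff_distrib_left]

section Convergence

variable {α ι X : Type*} [MeasurableSpace α] {μ : Measure α} [PseudoMetricSpace X]

theorem tendstoInMeasure_of_tendsto_integral_dist {F : ι → α → X} {g : α → X} {l : Filter ι}
    (hint : ∀ i, Integrable (fun x ↦ dist (F i x) (g x)) μ)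
    (hlim : Tendsto (fun i ↦ ∫ x, dist (F i x) (g x) ∂μ) l (𝓝 0)) :
    TendstoInMeasure μ F l g := by
  refine tendstoInMeasure_of_ne_top fun ε hε hε_top ↦ ?_
  have lintegral_edist (i : ι) :
      ∫⁻ x, edist (F i x) (g x) ∂μ = ENNReal.ofReal (∫ x, dist (F i x) (g x) ∂μ) := by
    simp_rw [edist_dist]
    exact (ofReal_integral_eq_lintegral_ofReal (hint i) (.of_forall fun _ ↦ dist_nonneg)).symm
  have markov (i : ι) :
      μ {x | ε ≤ edist (F i x) (g x)} ≤ ENNReal.ofReal (∫ x, dist (F i x) (g x) ∂μ) / ε := by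
    rw [← lintegral_edist]
    refine meas_ge_le_lintegral_div ?_ hε.ne' hε_top
    simpa only [edist_dist] using (hint i).aemeasurable.ennreal_ofReal
  have bound_lim :
      Tendsto (fun i ↦ ENNReal.ofReal (∫ x, dist (F i x) (g x) ∂μ) / ε) l (𝓝 0) := by
    simpa using ENNReal.Tendsto.div_const (ENNReal.tendsto_ofReal hlim) (.inr hε.ne')
  exact tendsto_of_tendsto_of_tendsto_of_le_of_le tendsto_const_nhds bound_lim
    (fun _ ↦ zero_le) markov

theorem integrable_dist_of_integrable_dist_const [IsFiniteMeasure μ] {g h : α → X} {a b : X}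
    (hg : AEStronglyMeasurable g μ) (hh : AEStronglyMeasurable h μ)
    (hga : Integrable (fun x ↦ dist a (g x)) μ) (hhb : Integrable (fun x ↦ dist b (h x)) μ) :
    Integrable (fun x ↦ dist (g x) (h x)) μ := by
  refine ((hga.add (integrable_const (dist a b))).add hhb).mono' (hg.dist hh)
    (.of_forall fun x ↦ ?_)
  calc ‖dist (g x) (h x)‖ = dist (g x) (h x) := Real.norm_of_nonneg dist_nonneg
    _ ≤ dist (g x) a + dist a b + dist b (h x) := dist_triangle4 ..
    _ = dist a (g x) + dist a b + dist b (h x) := by rw [dist_comm (g x) a]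

variable [MeasurableSpace X] [OpensMeasurableSpace X] [IsFiniteMeasure μ] {g : α → X} {s : Set X}

theorem tendsto_measure_preimage_boundaryLayer (hg : AEMeasurable g μ)
    (hs : ∀ᵐ x ∂μ, g x ∉ frontier s) :
    Tendsto (fun δ ↦ μ (g ⁻¹' boundaryLayer δ s)) (𝓝[>] 0) (𝓝 0) := by
  have hlim := tendsto_measure_biInter_gt (μ := μ) (a := (0 : ℝ))
    (s := fun δ ↦ g ⁻¹' boundaryLayer δ s)
    (fun δ _ ↦ hg.nullMeasurableSet_preimage (isOpen_boundaryLayer δ s).measurableSet)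
    (fun _ _ _ hδ ↦ preimage_mono (boundaryLayer_mono hδ s))
    ⟨1, one_pos, measure_ne_top _ _⟩
  have hfrontier : μ (g ⁻¹' frontier s) = 0 := measure_eq_zero_iff_ae_notMem.2 hs
  simpa only [← preimage_iInter, iInter_boundaryLayer, hfrontier, Function.comp_def] using hlim

theorem tendsto_measure_symmDiff_preimage_of_tendstoInMeasure {F : ι → α → X} {l : Filter ι}
    (hF : TendstoInMeasure μ F l g) (hg : AEMeasurable g μ) (hs : ∀ᵐ x ∂μ, g x ∉ frontier s) :
    Tendsto (fun i ↦ μ ((F i ⁻¹' s) ∆ (g ⁻¹' s))) l (𝓝 0) := by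
  refine ENNReal.tendsto_nhds_zero.2 fun ε hε ↦ ?_
  obtain ⟨δ, hδ_near, hδ⟩ : ∃ δ : ℝ, μ (g ⁻¹' boundaryLayer δ s) ≤ ε / 2 ∧ 0 < δ :=
    ((ENNReal.tendsto_nhds_zero.1 (tendsto_measure_preimage_boundaryLayer hg hs) _
      (ENNReal.half_pos hε.ne')).and self_mem_nhdsWithin).exists
  filter_upwards [ENNReal.tendsto_nhds_zero.1 (tendstoInMeasure_iff_dist.1 hF δ hδ) _
    (ENNReal.half_pos hε.ne')] with i hi_far
  calc μ ((F i ⁻¹' s) ∆ (g ⁻¹' s))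
      ≤ μ {x | δ ≤ dist (F i x) (g x)} + μ (g ⁻¹' boundaryLayer δ s) :=
        (measure_mono (symmDiff_preimage_subset_union_preimage_boundaryLayer (F i) g s δ)).trans
          (measure_union_le _ _)
    _ ≤ ε / 2 + ε / 2 := add_le_add hi_far hδ_near
    _ = ε := ENNReal.add_halves ε

end Convergence

theorem notMem_frontier_of_mem_iUnion {X ι : Type*} [TopologicalSpace X] {A : ι → Set X}
    (hopen : ∀ j, IsOpen (A j)) (hdisj : Pairwise (Function.onFun Disjoint A)) {x : X}
    (hx : x ∈ ⋃ l, A l) (j : ι) : x ∉ frontier (A j) := by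
  obtain ⟨l, hl⟩ := mem_iUnion.1 hx
  have hfrontier : Disjoint (frontier (A j)) (A l) := by
    rcases eq_or_ne j l with rfl | hjl
    · exact disjoint_frontier_iff_isOpen.2 (hopen j)
    · exact (hdisj hjl).frontier_left (hopen l)
  exact fun hx_frontier ↦ disjoint_left.1 hfrontier hx_frontier hl

instance isFiniteMeasure_restrict_I01 : IsFiniteMeasure (volume.restrict I01) :=
  inferInstanceAs (IsFiniteMeasure (volume.restrict (Icc 0 1)))

namespace NodeStat

variable {X : Type*} [MetricSpace X] [MeasurableSpace X] [BorelSpace X] (f : NodeStat X)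

theorem integrable_dist (V V' : Graphon) :
    Integrable (fun y ↦ dist (f.val V y) (f.val V' y)) (volume.restrict I01) := by
  obtain ⟨a, ha⟩ := f.integ V
  obtain ⟨b, hb⟩ := f.integ V'
  exact integrable_dist_of_integrable_dist_const
    (stronglyMeasurable_of_measurable (f.meas V)).aestronglyMeasurable
    (stronglyMeasurable_of_measurable (f.meas V')).aestronglyMeasurable ha hb

theorem tendstoInMeasure {W : ℕ → Graphon} {W₀ : Graphon}
    (hconv : Tendsto (fun n ↦ cutNorm fun x y ↦ (W n).W x y - W₀.W x y) atTop (𝓝 0)) :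
    TendstoInMeasure (volume.restrict I01) (fun n ↦ f.val (W n)) atTop (f.val W₀) :=
  tendstoInMeasure_of_tendsto_integral_dist (fun n ↦ f.integrable_dist (W n) W₀)
    (f.cont W W₀ hconv)

end NodeStat

theorem structural_consistency_node_stat_general
    {X : Type*} [MetricSpace X] [MeasurableSpace X] [BorelSpace X]
    (f : NodeStat X) {s : Set X} {W : ℕ → Graphon} {W₀ : Graphon}
    (hs : ∀ᵐ y ∂(volume.restrict I01), f.val W₀ y ∉ frontier s)
    (hconv : Tendsto (fun n ↦ cutNorm fun x y ↦ (W n).W x y - W₀.W x y) atTop (𝓝 0)) :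
    Tendsto (fun n ↦
        (volume ({y ∈ I01 | f.val (W n) y ∈ s} ∆ {y ∈ I01 | f.val W₀ y ∈ s})).toReal)
      atTop (𝓝 0) := by
  have hlim : Tendsto (fun n ↦ volume ({y ∈ I01 | f.val (W n) y ∈ s} ∆ {y ∈ I01 | f.val W₀ y ∈ s}))
      atTop (𝓝 0) :=
    (tendsto_measure_symmDiff_preimage_of_tendstoInMeasure (f.tendstoInMeasure hconv)
      (f.meas W₀).aemeasurable hs).congr fun n ↦
      (measure_inter_symmDiff_inter volume measurableSet_Icc _ _).symm
  exact (ENNReal.tendsto_toReal ENNReal.zero_ne_top).comp hlim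

/-- **Clustering by continuous node-level statistics is structurally consistent.**
Let `f` be a continuous node-level statistic in a metric space `X` and
`A 1, …, A N` disjoint open subsets of `X`.  Suppose every graphon `W n`
(`n = 0` being the limit) satisfies `f(W n)(y) ∈ ⋃ j, A j` for a.e. `y ∈ [0,1]`,
and `‖W n − W 0‖_□ → 0`.  Then for every color `j`, the Lebesgue measure of the
symmetric difference of the color classes
`c_{W n}⁻¹(j) = {y ∈ [0,1] : f(W n)(y) ∈ A j}` and `c_{W 0}⁻¹(j)` tends to `0`. -/
theorem structural_consistency_node_stat
    {X : Type*} [MetricSpace X] [MeasurableSpace X] [BorelSpace X]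
    (f : NodeStat X) (N : ℕ) (A : Fin N → Set X)
    (hopen : ∀ j, IsOpen (A j))
    (hdisj : ∀ j l, j ≠ l → Disjoint (A j) (A l))
    (W : ℕ → Graphon)
    (hmem : ∀ n, ∀ᵐ y ∂(volume.restrict I01), f.val (W n) y ∈ ⋃ j, A j)
    (hconv : Tendsto (fun n => cutNorm fun x y => (W n).W x y - (W 0).W x y)
      atTop (nhds 0)) :
    ∀ j : Fin N,
      Tendsto (fun n =>
          (volume (({y ∈ I01 | f.val (W n) y ∈ A j}) ∆ ({y ∈ I01 | f.val (W 0) y ∈ A j}))).toReal)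
        atTop (nhds 0) := by
  exact fun j ↦ structural_consistency_node_stat_general f
    ((hmem 0).mono fun _ hy ↦ notMem_frontier_of_mem_iUnion hopen hdisj hy j) hconv

end
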